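/- arXiv:1803.01306 — 2 statements merged into one kernel-verified Lean document; each statement's English description precedes it below -/
import Mathlib

section
/- Let c, d ∈ ℝ with c² + d² ≠ 0, and let f : ℝ → ℝ be a twice continuously differentiable function satisfying (f′)² = (d−c)f² + c and f″ = (d−c)f on all of ℝ. Then f has no zero if and only if either c < 0, or else c = 0, d > 0, and there exists a constant C ≠ 0 such that f(u) = C·e^{√d·u} for all u, or f(u) = C·e^{−√d·u} for all u. -/
open Real

/-!
If `c < 0`, a zero of `f` would make `(f')² = c` negative. If `c > 0`, then `f` must vanish
somewhere: for `d < c` it is a harmonic oscillation and changes sign after half a period, while for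
`c ≤ d` we have `(f')² ≥ c`, so `f'` has constant sign and is bounded away from `0`, which makes
`f` onto. If `c = 0` and `f` has no zero, the first equation reads `(f' / f)² = d`; since `f' / f`
is the derivative of `log |f|`, Darboux's theorem forces it to be one of the constants `±√d`.
-/

section NormedSpace

variable {E : Type*} [NormedAddCommGroup E] [NormedSpace ℝ E]

theorem eq_exp_smul_of_hasDerivAt_smul {g : ℝ → E} {a : ℝ} (hg : ∀ u, HasDerivAt g (a • g u) u)
    (u : ℝ) : g u = exp (a * u) • g 0 := by
  have hderiv (x : ℝ) : HasDerivAt (fun u ↦ exp (-(a * u)) • g u) 0 x := by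
    have hexp : HasDerivAt (fun u ↦ exp (-(a * u))) (exp (-(a * x)) * -a) x := by
      simpa using ((hasDerivAt_id x).const_mul a).neg.exp
    refine (hexp.smul (hg x)).congr_deriv ?_
    module
  have hconst : exp (-(a * u)) • g u = g 0 := by
    simpa using is_const_of_deriv_eq_zero (fun x ↦ (hderiv x).differentiableAt)
      (fun x ↦ (hderiv x).deriv) u 0
  rw [← hconst, smul_smul, ← exp_add, add_neg_cancel, exp_zero, one_smul]

theorem antiperiodic_of_hasDerivAt_neg_sq_smul {g g' : ℝ → E} {ω : ℝ} (hω : ω ≠ 0)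
    (hg : ∀ u, HasDerivAt g (g' u) u) (hg' : ∀ u, HasDerivAt g' (-ω ^ 2 • g u) u) :
    Function.Antiperiodic g (π / ω) := by
  intro x
  -- The Wronskian of `g` and the solution `u ↦ sin (ω * (u - x))` is constant.
  have hderiv (y : ℝ) : HasDerivAt
      (fun u ↦ (ω * cos (ω * (u - x))) • g u - sin (ω * (u - x)) • g' u) 0 y := by
    have hphase : HasDerivAt (fun u ↦ ω * (u - x)) ω y := by
      simpa using ((hasDerivAt_id y).sub_const x).const_mul ω
    refine (((hphase.cos.const_mul ω).smul (hg y)).sub (hphase.sin.smul (hg' y))).congr_deriv ?_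
    module
  have hconst : -(ω • g (x + π / ω)) = ω • g x := by
    simpa [mul_div_cancel₀ π hω] using is_const_of_deriv_eq_zero
      (fun y ↦ (hderiv y).differentiableAt) (fun y ↦ (hderiv y).deriv) (x + π / ω) x
  apply smul_right_injective E hω
  simp only [smul_neg, ← hconst, neg_neg]

end NormedSpace

theorem exists_eq_zero_of_antiperiodic {X α : Type*} [TopologicalSpace X] [PreconnectedSpace X]
    [AddZeroClass X] [AddCommGroup α] [LinearOrder α] [IsOrderedAddMonoid α] [TopologicalSpace α]
    [OrderClosedTopology α] {g : X → α} {T : X} (hg : Continuous g)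
    (hT : Function.Antiperiodic g T) : ∃ x, g x = 0 := by
  have hneg : g T = -g 0 := by simpa using hT 0
  rcases le_total (g 0) 0 with h0 | h0
  · exact mem_range_of_exists_le_of_exists_ge hg ⟨0, h0⟩ ⟨T, hneg ▸ neg_nonneg.2 h0⟩
  · exact mem_range_of_exists_le_of_exists_ge hg ⟨T, hneg ▸ neg_nonpos.2 h0⟩ ⟨0, h0⟩

variable {f : ℝ → ℝ}

theorem exists_eq_zero_of_hasDerivAt_mul_of_neg {f' : ℝ → ℝ} {k : ℝ} (hk : k < 0)
    (hf : ∀ u, HasDerivAt f (f' u) u) (hf' : ∀ u, HasDerivAt f' (k * f u) u) : ∃ u, f u = 0 := by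
  have hanti : Function.Antiperiodic f (π / √(-k)) := by
    refine antiperiodic_of_hasDerivAt_neg_sq_smul (sqrt_ne_zero'.2 (neg_pos.2 hk)) hf fun u ↦ ?_
    rw [sq_sqrt (neg_pos.2 hk).le, neg_neg]
    exact hf' u
  exact exists_eq_zero_of_antiperiodic
    (continuous_iff_continuousAt.2 fun u ↦ (hf u).continuousAt) hanti

theorem forall_deriv_neg_or_forall_deriv_pos (hf : Differentiable ℝ f) (hf' : ∀ u, deriv f u ≠ 0) :
    (∀ u, deriv f u < 0) ∨ ∀ u, 0 < deriv f u := by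
  simpa using hasDerivWithinAt_forall_lt_or_forall_gt_of_forall_ne convex_univ
    (fun u _ ↦ (hf u).hasDerivAt.hasDerivWithinAt) (fun u _ ↦ hf' u)

theorem surjective_of_le_deriv {s : ℝ} (hs : 0 < s) (hf : Differentiable ℝ f)
    (hf' : ∀ u, s ≤ deriv f u) : Function.Surjective f := by
  have hgrowth := mul_sub_le_image_sub_of_le_deriv hf hf'
  have htop : Filter.Tendsto (fun u ↦ s * u + f 0) .atTop .atTop :=
    Filter.tendsto_atTop_add_const_right _ _ (Filter.tendsto_id.const_mul_atTop hs)
  have hbot : Filter.Tendsto (fun u ↦ s * u + f 0) .atBot .atBot :=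
    Filter.tendsto_atBot_add_const_right _ _ (Filter.tendsto_id.const_mul_atBot hs)
  refine hf.continuous.surjective (Filter.tendsto_atTop_mono' _ ?_ htop)
    (Filter.tendsto_atBot_mono' _ ?_ hbot)
  · filter_upwards [Filter.eventually_ge_atTop 0] with u hu
    linarith [hgrowth hu]
  · filter_upwards [Filter.eventually_le_atBot 0] with u hu
    linarith [hgrowth hu]

theorem surjective_of_le_abs_deriv {s : ℝ} (hs : 0 < s) (hf : Differentiable ℝ f)
    (hf' : ∀ u, s ≤ |deriv f u|) : Function.Surjective f := by
  rcases forall_deriv_neg_or_forall_deriv_pos hf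
    fun u ↦ abs_pos.1 (hs.trans_le (hf' u)) with hneg | hpos
  · have hsurj : Function.Surjective (-f) := surjective_of_le_deriv hs hf.neg fun u ↦ by
      simpa [deriv.neg, abs_of_neg (hneg u)] using hf' u
    simpa [Function.comp_def] using neg_surjective.comp hsurj
  · exact surjective_of_le_deriv hs hf fun u ↦ by simpa only [abs_of_pos (hpos u)] using hf' u

theorem surjective_of_sq_deriv_eq {c k : ℝ} (hc : 0 < c) (hk : 0 ≤ k) (hf : Differentiable ℝ f)
    (hf' : ∀ u, deriv f u ^ 2 = k * f u ^ 2 + c) : Function.Surjective f := by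
  refine surjective_of_le_abs_deriv (sqrt_pos.2 hc) hf fun u ↦ ?_
  rw [sqrt_le_left (abs_nonneg _), sq_abs, hf' u]
  exact le_add_of_nonneg_left (mul_nonneg hk (sq_nonneg _))

theorem forall_deriv_eq_or_forall_deriv_eq_neg {a : ℝ} (hf : Differentiable ℝ f)
    (hf' : ∀ u, deriv f u ^ 2 = a ^ 2) : (∀ u, deriv f u = a) ∨ ∀ u, deriv f u = -a := by
  have hpm (u : ℝ) : deriv f u = a ∨ deriv f u = -a := sq_eq_sq_iff_eq_or_eq_neg.1 (hf' u)
  rcases eq_or_ne a 0 with rfl | ha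
  · simpa using hpm
  have hne (u : ℝ) : deriv f u ≠ 0 := by
    rcases hpm u with hu | hu <;> simpa [hu] using ha
  have hconst (u : ℝ) : deriv f u = deriv f 0 := by
    rcases sq_eq_sq_iff_eq_or_eq_neg.1 ((hf' u).trans (hf' 0).symm) with h | h
    · exact h
    · rcases forall_deriv_neg_or_forall_deriv_pos hf hne with hsign | hsign <;>
        linarith [hsign u, hsign 0]
  simpa only [hconst, forall_const] using hpm 0

theorem eq_mul_exp_or_eq_mul_exp_neg_of_sq_deriv_eq {a : ℝ} (hf : Differentiable ℝ f)
    (hf0 : ∀ u, f u ≠ 0) (hf' : ∀ u, deriv f u ^ 2 = a ^ 2 * f u ^ 2) :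
    (∀ u, f u = f 0 * exp (a * u)) ∨ ∀ u, f u = f 0 * exp (-(a * u)) := by
  have hlog (u : ℝ) : deriv (fun x ↦ log (f x)) u = deriv f u / f u := deriv.log (hf u) (hf0 u)
  have hsq (u : ℝ) : deriv (fun x ↦ log (f x)) u ^ 2 = a ^ 2 := by
    rw [hlog, div_pow, hf', mul_div_cancel_right₀ _ (pow_ne_zero 2 (hf0 u))]
  have hexp {b : ℝ} (hb : ∀ u, deriv (fun x ↦ log (f x)) u = b) (u : ℝ) :
      f u = f 0 * exp (b * u) := by
    have hderiv (x : ℝ) : HasDerivAt f (b • f x) x := by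
      rw [smul_eq_mul, ← hb x, hlog, div_mul_cancel₀ _ (hf0 x)]
      exact (hf x).hasDerivAt
    rw [eq_exp_smul_of_hasDerivAt_smul hderiv u, smul_eq_mul, mul_comm]
  rcases forall_deriv_eq_or_forall_deriv_eq_neg (hf.log hf0) hsq with h | h
  · exact .inl (hexp h)
  · exact .inr fun u ↦ by simpa only [neg_mul] using hexp h u

/-- A C² solution f on ℝ of (f′)² = (d−c)f² + c, f″ = (d−c)f,
with c² + d² ≠ 0, has no zero if and only if either c < 0, or c = 0, d > 0 and
f(u) = C·e^{√d·u} or f(u) = C·e^{−√d·u} for some constant C ≠ 0. -/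
theorem ode_solution_has_no_zero_iff
    (c d : ℝ) (hcd : c ^ 2 + d ^ 2 ≠ 0) (f : ℝ → ℝ)
    (hf : ContDiff ℝ 2 f)
    (hode1 : ∀ u, (deriv f u) ^ 2 = (d - c) * (f u) ^ 2 + c)
    (hode2 : ∀ u, deriv (deriv f) u = (d - c) * f u) :
    (∀ u, f u ≠ 0) ↔
      (c < 0 ∨ (c = 0 ∧ 0 < d ∧ ∃ C : ℝ, C ≠ 0 ∧
        ((∀ u, f u = C * Real.exp (Real.sqrt d * u)) ∨
         (∀ u, f u = C * Real.exp (-(Real.sqrt d * u)))))) := by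
  have hdiff : Differentiable ℝ f := hf.differentiable two_ne_zero
  constructor
  · intro hf0
    rcases lt_trichotomy c 0 with hc | rfl | hc
    · exact .inl hc
    · simp only [sub_zero, add_zero] at hode1
      have hd0 : d ≠ 0 := by simpa using hcd
      have hd : 0 ≤ d := nonneg_of_mul_nonneg_left
        ((sq_nonneg _).trans_eq (hode1 0)) (sq_pos_of_ne_zero (hf0 0))
      refine .inr ⟨rfl, hd.lt_of_ne' hd0, f 0, hf0 0, ?_⟩
      exact eq_mul_exp_or_eq_mul_exp_neg_of_sq_deriv_eq hdiff hf0 (by rwa [sq_sqrt hd])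
    · obtain ⟨u, hu⟩ : ∃ u, f u = 0 := by
        rcases lt_or_ge (d - c) 0 with hk | hk
        · exact exists_eq_zero_of_hasDerivAt_mul_of_neg hk (fun u ↦ (hdiff u).hasDerivAt)
            fun u ↦ hode2 u ▸ (hf.differentiable_deriv_two u).hasDerivAt
        · exact surjective_of_sq_deriv_eq hc hk hdiff hode1 0
      exact absurd hu (hf0 u)
  · rintro (hc | ⟨-, -, C, hC, h | h⟩) u
    · intro hu
      have hsq : deriv f u ^ 2 = c := by simpa [hu] using hode1 u
      exact hc.not_ge (hsq ▸ sq_nonneg _)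
    · simp [h, hC]
    · simp [h, hC]
end

section
/- Let Σ ⊆ ℝ² be a connected open set, ρ : Σ → (0,∞) a smooth solution of the PDE system, and X, N : Σ → ℝ³ smooth maps satisfying the Gauss–Weingarten system and the conformal frame relations. Define the vector fields v₁ := ((ρ_u² − ρ·ρ_uu)/ρ²)·X_u − (ρ_u·ρ_v/ρ²)·X_v + (ρ_u/ρ)·N and v₂ := −(ρ_u·ρ_v/ρ²)·X_u + ((ρ_v² − ρ·ρ_vv)/ρ²)·X_v − (ρ_v/ρ)·N, and set m := ρ^{−2}·(X_u × X_uu) and n := ρ^{−2}·(X_v × X_vv), where × is the Lorentzian cross product. Then: (i) v₁ and v₂ are constant on Σ (all their partial derivatives vanish); (ii) ⟨m, v₁⟩ = 0 and ⟨m_v, v₁⟩ = 0 at every point of Σ, and likewise ⟨n, v₂⟩ = 0 and ⟨n_u, v₂⟩ = 0; (iii) if ρ_u(p) ≠ 0 for some p ∈ Σ then v₁ ≠ 0, and if ρ_v(p) ≠ 0 for some p ∈ Σ then v₂ ≠ 0. -/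
open Real Filter

/-- Partial derivative in the first variable. -/
noncomputable def pu {E : Type*} [NormedAddCommGroup E] [NormedSpace ℝ E]
    (f : ℝ → ℝ → E) (u v : ℝ) : E := deriv (fun x => f x v) u

/-- Partial derivative in the second variable. -/
noncomputable def pv {E : Type*} [NormedAddCommGroup E] [NormedSpace ℝ E]
    (f : ℝ → ℝ → E) (u v : ℝ) : E := deriv (fun y => f u y) v

/-- Minkowski inner product on ℝ³ = ℝ^{2,1}, with coordinates (x₁, x₂, x₀). -/
def mink (x y : ℝ × ℝ × ℝ) : ℝ := x.1 * y.1 + x.2.1 * y.2.1 - x.2.2 * y.2.2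

/-- Determinant of the 3×3 matrix with rows a, b, c. -/
def det3 (a b c : ℝ × ℝ × ℝ) : ℝ :=
  a.1 * (b.2.1 * c.2.2 - b.2.2 * c.2.1)
    - a.2.1 * (b.1 * c.2.2 - b.2.2 * c.1)
    + a.2.2 * (b.1 * c.2.1 - b.2.1 * c.1)

/-- Lorentzian cross product on ℝ^{2,1}: ⟨a × b, c⟩ = det(a,b,c) for all c. -/
def lcross (a b : ℝ × ℝ × ℝ) : ℝ × ℝ × ℝ :=
  (a.2.1 * b.2.2 - a.2.2 * b.2.1,
   a.2.2 * b.1 - a.1 * b.2.2,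
   -(a.1 * b.2.1 - a.2.1 * b.1))

/-!
By the Gauss–Weingarten system, the constancy of `v₁` amounts to six scalar identities between its
coordinates in the frame `(X_u, X_v, N)`; they follow from `ρ_uv = 0`, the other equation of the
PDE system and the `u`-derivative of the latter. Since `X_uu` contains `N` with coefficient `1`,
`v₁` is a combination of `X_u` and `X_uu`, hence orthogonal to `m`. As `v₁` is constant, `m` stays
in the fixed plane `v₁^⊥`, and so does `m_v`. A zero of `v₁` where `ρ_u ≠ 0` would put `N` in the
span of `X_u` and `X_v`. Finally, the exchange `(u, v, N) ↦ (v, u, -N)` preserves the whole system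
and turns `v₁`, `m` into `v₂`, `n`.
-/

open Function Topology ContDiff

section PartialDerivatives

variable {E : Type*} [NormedAddCommGroup E] [NormedSpace ℝ E]
  {S : Set (ℝ × ℝ)} {f g : ℝ → ℝ → E} {u v : ℝ} {k n : ℕ∞ω}

theorem hasDerivAt_pu_fderiv (hf : DifferentiableAt ℝ (uncurry f) (u, v)) :
    HasDerivAt (fun x => f x v) (fderiv ℝ (uncurry f) (u, v) (1, 0)) u :=
  HasFDerivAt.comp_hasDerivAt (f := fun x : ℝ => (x, v)) u hf.hasFDerivAt
    ((hasDerivAt_id u).prodMk (hasDerivAt_const u v))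

theorem hasDerivAt_pv_fderiv (hf : DifferentiableAt ℝ (uncurry f) (u, v)) :
    HasDerivAt (fun y => f u y) (fderiv ℝ (uncurry f) (u, v) (0, 1)) v :=
  HasFDerivAt.comp_hasDerivAt (f := fun y : ℝ => (u, y)) v hf.hasFDerivAt
    ((hasDerivAt_const v u).prodMk (hasDerivAt_id v))

theorem pu_eq_fderiv (hf : DifferentiableAt ℝ (uncurry f) (u, v)) :
    pu f u v = fderiv ℝ (uncurry f) (u, v) (1, 0) :=
  (hasDerivAt_pu_fderiv hf).deriv

theorem pv_eq_fderiv (hf : DifferentiableAt ℝ (uncurry f) (u, v)) :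
    pv f u v = fderiv ℝ (uncurry f) (u, v) (0, 1) :=
  (hasDerivAt_pv_fderiv hf).deriv

theorem hasDerivAt_pu (hS : IsOpen S) (hf : ContDiffOn ℝ n (uncurry f) S) (hn : n ≠ 0)
    (hp : (u, v) ∈ S) : HasDerivAt (fun x => f x v) (pu f u v) u :=
  (hasDerivAt_pu_fderiv <| (hf.differentiableOn hn).differentiableAt
    (hS.mem_nhds hp)).differentiableAt.hasDerivAt

theorem hasDerivAt_pv (hS : IsOpen S) (hf : ContDiffOn ℝ n (uncurry f) S) (hn : n ≠ 0)
    (hp : (u, v) ∈ S) : HasDerivAt (fun y => f u y) (pv f u v) v :=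
  (hasDerivAt_pv_fderiv <| (hf.differentiableOn hn).differentiableAt
    (hS.mem_nhds hp)).differentiableAt.hasDerivAt

theorem contDiffOn_uncurry_swap (hf : ContDiffOn ℝ n (uncurry f) S) :
    ContDiffOn ℝ n (uncurry fun u v => f v u) (Prod.swap ⁻¹' S) :=
  hf.comp (contDiff_snd.prodMk contDiff_fst).contDiffOn fun _ hp => hp

theorem eventually_mk_right_mem (hS : IsOpen S) (hp : (u, v) ∈ S) : ∀ᶠ x in 𝓝 u, (x, v) ∈ S :=
  (Continuous.prodMk_left v).continuousAt.eventually_mem (hS.mem_nhds hp)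

theorem eventually_mk_left_mem (hS : IsOpen S) (hp : (u, v) ∈ S) : ∀ᶠ y in 𝓝 v, (u, y) ∈ S :=
  (Continuous.prodMk_right u).continuousAt.eventually_mem (hS.mem_nhds hp)

theorem pu_congr (hS : IsOpen S) (h : ∀ p ∈ S, f p.1 p.2 = g p.1 p.2) (hp : (u, v) ∈ S) :
    pu f u v = pu g u v :=
  EventuallyEq.deriv_eq <| (eventually_mk_right_mem hS hp).mono fun _ hx => h _ hx

theorem pv_congr (hS : IsOpen S) (h : ∀ p ∈ S, f p.1 p.2 = g p.1 p.2) (hp : (u, v) ∈ S) :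
    pv f u v = pv g u v :=
  EventuallyEq.deriv_eq <| (eventually_mk_left_mem hS hp).mono fun _ hy => h _ hy

theorem contDiffOn_pu (hS : IsOpen S) (hf : ContDiffOn ℝ n (uncurry f) S) (hkn : k + 1 ≤ n) :
    ContDiffOn ℝ k (uncurry (pu f)) S :=
  ((hf.fderiv_of_isOpen hS hkn).clm_apply contDiffOn_const).congr fun _ hp =>
    pu_eq_fderiv <| (hf.differentiableOn (by rintro rfl; simp at hkn)).differentiableAt
      (hS.mem_nhds hp)

theorem contDiffOn_pv (hS : IsOpen S) (hf : ContDiffOn ℝ n (uncurry f) S) (hkn : k + 1 ≤ n) :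
    ContDiffOn ℝ k (uncurry (pv f)) S :=
  ((hf.fderiv_of_isOpen hS hkn).clm_apply contDiffOn_const).congr fun _ hp =>
    pv_eq_fderiv <| (hf.differentiableOn (by rintro rfl; simp at hkn)).differentiableAt
      (hS.mem_nhds hp)

theorem pu_pv_eq_pv_pu (hS : IsOpen S) (hf : ContDiffOn ℝ n (uncurry f) S) (hn : 2 ≤ n)
    (hp : (u, v) ∈ S) : pu (pv f) u v = pv (pu f) u v := by
  have hSp : S ∈ 𝓝 (u, v) := hS.mem_nhds hp
  have hn0 : n ≠ 0 := by rintro rfl; simp at hn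
  have hdf : ∀ q ∈ S, DifferentiableAt ℝ (uncurry f) q := fun q hq =>
    (hf.differentiableOn hn0).differentiableAt (hS.mem_nhds hq)
  have hdiff {g : ℝ → ℝ → E} (hg : ContDiffOn ℝ 1 (uncurry g) S) :
      DifferentiableAt ℝ (uncurry g) (u, v) :=
    (hg.differentiableOn one_ne_zero).differentiableAt hSp
  have hD : DifferentiableAt ℝ (fderiv ℝ (uncurry f)) (u, v) :=
    ((hf.fderiv_of_isOpen (m := 1) hS hn).differentiableOn one_ne_zero).differentiableAt hSp
  have hfderiv (w z : ℝ × ℝ) : fderiv ℝ (fun q => fderiv ℝ (uncurry f) q w) (u, v) z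
      = fderiv ℝ (fderiv ℝ (uncurry f)) (u, v) z w := by
    simp [fderiv_clm_apply hD (differentiableAt_const w)]
  have hpv : uncurry (pv f) =ᶠ[𝓝 (u, v)] fun q => fderiv ℝ (uncurry f) q (0, 1) :=
    eventually_of_mem hSp fun q hq => pv_eq_fderiv (hdf q hq)
  have hpu : uncurry (pu f) =ᶠ[𝓝 (u, v)] fun q => fderiv ℝ (uncurry f) q (1, 0) :=
    eventually_of_mem hSp fun q hq => pu_eq_fderiv (hdf q hq)
  rw [pu_eq_fderiv (hdiff (contDiffOn_pv hS hf hn)), pv_eq_fderiv (hdiff (contDiffOn_pu hS hf hn)),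
    hpv.fderiv_eq, hpu.fderiv_eq, hfderiv, hfderiv]
  exact (hf.contDiffAt hSp).isSymmSndFDerivAt (by simpa using hn) _ _

theorem eq_of_pu_eq_zero_of_pv_eq_zero (hS : IsOpen S) (hSc : IsPreconnected S)
    (hf : DifferentiableOn ℝ (uncurry f) S) (hu : ∀ p ∈ S, pu f p.1 p.2 = 0)
    (hv : ∀ p ∈ S, pv f p.1 p.2 = 0) {p q : ℝ × ℝ} (hp : p ∈ S) (hq : q ∈ S) :
    f p.1 p.2 = f q.1 q.2 := by
  refine hS.is_const_of_fderiv_eq_zero (f := uncurry f) hSc hf (fun x hx => ?_) hp hq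
  have hfx : DifferentiableAt ℝ (uncurry f) x := hf.differentiableAt (hS.mem_nhds hx)
  ext
  · simpa [pu_eq_fderiv hfx] using hu x hx
  · simpa [pv_eq_fderiv hfx] using hv x hx

end PartialDerivatives

section Minkowski

theorem contDiffOn_lcross {F : Type*} [NormedAddCommGroup F] [NormedSpace ℝ F] {s : Set F}
    {n : ℕ∞ω} {a b : F → ℝ × ℝ × ℝ} (ha : ContDiffOn ℝ n a s) (hb : ContDiffOn ℝ n b s) :
    ContDiffOn ℝ n (fun x => lcross (a x) (b x)) s := by
  unfold lcross
  fun_prop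

theorem mink_smul_lcross_add (a b : ℝ × ℝ × ℝ) (r s t : ℝ) :
    mink (r • lcross a b) (s • a + t • b) = 0 := by
  simp only [mink, lcross, Prod.smul_mk, Prod.smul_fst, Prod.smul_snd, Prod.fst_add, Prod.snd_add,
    smul_eq_mul]
  ring

/-- The Minkowski product with a fixed second vector, as a continuous linear functional. -/
noncomputable def minkRight (c : ℝ × ℝ × ℝ) : ℝ × ℝ × ℝ →L[ℝ] ℝ :=
  LinearMap.toContinuousLinearMap
    { toFun := fun x => mink x c
      map_add' := fun x y => by simp only [mink, Prod.fst_add, Prod.snd_add]; ring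
      map_smul' := fun r x => by
        simp only [mink, Prod.smul_fst, Prod.smul_snd, smul_eq_mul, RingHom.id_apply]; ring }

theorem minkRight_apply (c x : ℝ × ℝ × ℝ) : minkRight c x = mink x c := rfl

theorem mink_eq_zero_of_hasDerivAt {f : ℝ → ℝ × ℝ × ℝ} {f' c : ℝ × ℝ × ℝ} {t : ℝ}
    (hf : HasDerivAt f f' t) (hc : ∀ᶠ x in 𝓝 t, mink (f x) c = 0) : mink f' c = 0 :=
  ((minkRight c).hasFDerivAt.comp_hasDerivAt t hf).unique
    ((hasDerivAt_const t 0).congr_of_eventuallyEq hc)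

theorem notMem_span_pair_of_mink_eq_zero {a b c : ℝ × ℝ × ℝ} (ha : mink a c = 0)
    (hb : mink b c = 0) (hc : mink c c ≠ 0) : c ∉ Submodule.span ℝ {a, b} := fun hmem => by
  obtain ⟨s, t, hst⟩ := Submodule.mem_span_pair.mp hmem
  have hzero : minkRight c (s • a + t • b) = 0 := by
    simp only [map_add, map_smul, minkRight_apply, ha, hb, smul_zero, add_zero]
  exact hc (by rwa [hst] at hzero)

end Minkowski

/-- A solution `ρ` of the planar PDE system together with a solution `(X, N)` of its
Gauss–Weingarten system on the open set `S`. No metric on the ambient space `E` is involved. -/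
structure PlanarGaussWeingarten {E : Type*} [NormedAddCommGroup E] [NormedSpace ℝ E]
    (S : Set (ℝ × ℝ)) (ρ : ℝ → ℝ → ℝ) (X N : ℝ → ℝ → E) : Prop where
  isOpen : IsOpen S
  smooth_ρ : ContDiffOn ℝ ∞ (uncurry ρ) S
  smooth_X : ContDiffOn ℝ ∞ (uncurry X) S
  smooth_N : ContDiffOn ℝ ∞ (uncurry N) S
  ρ_ne_zero : ∀ ⦃u v⦄, (u, v) ∈ S → ρ u v ≠ 0
  gauss : ∀ ⦃u v⦄, (u, v) ∈ S →
    ρ u v * (pu (pu ρ) u v + pv (pv ρ) u v) - (pu ρ u v ^ 2 + pv ρ u v ^ 2) + 1 = 0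
  pv_pu_ρ : ∀ ⦃u v⦄, (u, v) ∈ S → pv (pu ρ) u v = 0
  pu_pu_X : ∀ ⦃u v⦄, (u, v) ∈ S → pu (pu X) u v =
    (pu ρ u v / ρ u v) • pu X u v - (pv ρ u v / ρ u v) • pv X u v + N u v
  pv_pv_X : ∀ ⦃u v⦄, (u, v) ∈ S → pv (pv X) u v =
    -((pu ρ u v / ρ u v) • pu X u v) + (pv ρ u v / ρ u v) • pv X u v - N u v
  pv_pu_X : ∀ ⦃u v⦄, (u, v) ∈ S → pv (pu X) u v =
    (pv ρ u v / ρ u v) • pu X u v + (pu ρ u v / ρ u v) • pv X u v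
  pu_N : ∀ ⦃u v⦄, (u, v) ∈ S → pu N u v = (ρ u v ^ 2)⁻¹ • pu X u v
  pv_N : ∀ ⦃u v⦄, (u, v) ∈ S → pv N u v = -((ρ u v ^ 2)⁻¹ • pv X u v)

/-- The axial direction field `v₁` of the `u`-curvature lines. When `ρ_uv = 0`, its coordinates in
the frame `(X_u, X_v, N)` are `(-h_uu, h_uv, h_u)` with `h = log ρ`. -/
noncomputable def axialU {E : Type*} [NormedAddCommGroup E] [NormedSpace ℝ E]
    (ρ : ℝ → ℝ → ℝ) (X N : ℝ → ℝ → E) (u v : ℝ) : E :=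
  ((pu ρ u v ^ 2 - ρ u v * pu (pu ρ) u v) / ρ u v ^ 2) • pu X u v
    - (pu ρ u v * pv ρ u v / ρ u v ^ 2) • pv X u v + (pu ρ u v / ρ u v) • N u v

/-- The axial direction field `v₂` of the `v`-curvature lines. -/
noncomputable def axialV {E : Type*} [NormedAddCommGroup E] [NormedSpace ℝ E]
    (ρ : ℝ → ℝ → ℝ) (X N : ℝ → ℝ → E) (u v : ℝ) : E :=
  -((pu ρ u v * pv ρ u v / ρ u v ^ 2) • pu X u v)
    + ((pv ρ u v ^ 2 - ρ u v * pv (pv ρ) u v) / ρ u v ^ 2) • pv X u v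
    - (pv ρ u v / ρ u v) • N u v

/-- The normal `m = ρ⁻² (X_u × X_uu)` of the osculating planes of the `u`-curvature lines. -/
noncomputable def osculatingNormalU (ρ : ℝ → ℝ → ℝ) (X : ℝ → ℝ → ℝ × ℝ × ℝ) (u v : ℝ) :
    ℝ × ℝ × ℝ :=
  (ρ u v ^ 2)⁻¹ • lcross (pu X u v) (pu (pu X) u v)

/-- The normal `n = ρ⁻² (X_v × X_vv)` of the osculating planes of the `v`-curvature lines. -/
noncomputable def osculatingNormalV (ρ : ℝ → ℝ → ℝ) (X : ℝ → ℝ → ℝ × ℝ × ℝ) (u v : ℝ) :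
    ℝ × ℝ × ℝ :=
  (ρ u v ^ 2)⁻¹ • lcross (pv X u v) (pv (pv X) u v)

theorem axialV_eq_axialU_swap {E : Type*} [NormedAddCommGroup E] [NormedSpace ℝ E]
    (ρ : ℝ → ℝ → ℝ) (X N : ℝ → ℝ → E) (u v : ℝ) :
    axialV ρ X N u v
      = axialU (fun u v => ρ v u) (fun u v => X v u) (fun u v => -N v u) v u := by
  change _ = ((pv ρ u v ^ 2 - ρ u v * pv (pv ρ) u v) / ρ u v ^ 2) • pv X u v
    - (pv ρ u v * pu ρ u v / ρ u v ^ 2) • pu X u v + (pv ρ u v / ρ u v) • -N u v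
  unfold axialV
  module

namespace PlanarGaussWeingarten

section NormedSpace

variable {E : Type*} [NormedAddCommGroup E] [NormedSpace ℝ E]
  {S : Set (ℝ × ℝ)} {ρ : ℝ → ℝ → ℝ} {X N : ℝ → ℝ → E} {u v : ℝ}

theorem smooth_pu_ρ (h : PlanarGaussWeingarten S ρ X N) : ContDiffOn ℝ ∞ (uncurry (pu ρ)) S :=
  contDiffOn_pu h.isOpen h.smooth_ρ (by simp)

theorem smooth_pv_ρ (h : PlanarGaussWeingarten S ρ X N) : ContDiffOn ℝ ∞ (uncurry (pv ρ)) S :=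
  contDiffOn_pv h.isOpen h.smooth_ρ (by simp)

theorem smooth_pu_pu_ρ (h : PlanarGaussWeingarten S ρ X N) :
    ContDiffOn ℝ ∞ (uncurry (pu (pu ρ))) S :=
  contDiffOn_pu h.isOpen h.smooth_pu_ρ (by simp)

theorem smooth_pv_pv_ρ (h : PlanarGaussWeingarten S ρ X N) :
    ContDiffOn ℝ ∞ (uncurry (pv (pv ρ))) S :=
  contDiffOn_pv h.isOpen h.smooth_pv_ρ (by simp)

theorem smooth_pu_X (h : PlanarGaussWeingarten S ρ X N) : ContDiffOn ℝ ∞ (uncurry (pu X)) S :=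
  contDiffOn_pu h.isOpen h.smooth_X (by simp)

theorem smooth_pv_X (h : PlanarGaussWeingarten S ρ X N) : ContDiffOn ℝ ∞ (uncurry (pv X)) S :=
  contDiffOn_pv h.isOpen h.smooth_X (by simp)

theorem pu_pv_ρ (h : PlanarGaussWeingarten S ρ X N) (hp : (u, v) ∈ S) : pu (pv ρ) u v = 0 :=
  (pu_pv_eq_pv_pu h.isOpen h.smooth_ρ (WithTop.coe_le_coe.2 le_top) hp).trans (h.pv_pu_ρ hp)

theorem pu_pv_X (h : PlanarGaussWeingarten S ρ X N) (hp : (u, v) ∈ S) :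
    pu (pv X) u v = (pv ρ u v / ρ u v) • pu X u v + (pu ρ u v / ρ u v) • pv X u v :=
  (pu_pv_eq_pv_pu h.isOpen h.smooth_X (WithTop.coe_le_coe.2 le_top) hp).trans (h.pv_pu_X hp)

theorem swap (h : PlanarGaussWeingarten S ρ X N) :
    PlanarGaussWeingarten (Prod.swap ⁻¹' S) (fun u v => ρ v u) (fun u v => X v u)
      (fun u v => -N v u) where
  isOpen := h.isOpen.preimage continuous_swap
  smooth_ρ := contDiffOn_uncurry_swap h.smooth_ρ
  smooth_X := contDiffOn_uncurry_swap h.smooth_X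
  smooth_N := (contDiffOn_uncurry_swap h.smooth_N).neg
  ρ_ne_zero := fun _ _ hp => h.ρ_ne_zero hp
  gauss := fun u v hp => by
    have hgauss := h.gauss hp
    change ρ v u * (pv (pv ρ) v u + pu (pu ρ) v u) - (pv ρ v u ^ 2 + pu ρ v u ^ 2) + 1 = 0
    linear_combination hgauss
  pv_pu_ρ := fun _ _ hp => h.pu_pv_ρ hp
  pu_pu_X := fun u v hp => (h.pv_pv_X hp).trans <|
    show _ = (pv ρ v u / ρ v u) • pv X v u - (pu ρ v u / ρ v u) • pu X v u + -N v u by abel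
  pv_pv_X := fun u v hp => (h.pu_pu_X hp).trans <|
    show _ = -((pv ρ v u / ρ v u) • pv X v u) + (pu ρ v u / ρ v u) • pu X v u - -N v u by abel
  pv_pu_X := fun _ _ hp => (h.pu_pv_X hp).trans (add_comm _ _)
  pu_N := fun u v hp => deriv.fun_neg.trans <| neg_eq_iff_eq_neg.mpr (h.pv_N hp)
  pv_N := fun u v hp => deriv.fun_neg.trans <| congrArg Neg.neg (h.pu_N hp)

theorem pv_pu_pu_ρ (h : PlanarGaussWeingarten S ρ X N) (hp : (u, v) ∈ S) :
    pv (pu (pu ρ)) u v = 0 := by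
  rw [← pu_pv_eq_pv_pu h.isOpen h.smooth_pu_ρ (WithTop.coe_le_coe.2 le_top) hp,
    pu_congr (f := pv (pu ρ)) (g := fun _ _ => 0) h.isOpen (fun _ hq => h.pv_pu_ρ hq) hp]
  exact deriv_const u 0

theorem pu_pv_pv_ρ (h : PlanarGaussWeingarten S ρ X N) (hp : (u, v) ∈ S) :
    pu (pv (pv ρ)) u v = 0 :=
  h.swap.pv_pu_pu_ρ (u := v) (v := u) hp

theorem ρ_mul_pu_pu_pu_ρ (h : PlanarGaussWeingarten S ρ X N) (hp : (u, v) ∈ S) :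
    ρ u v * pu (pu (pu ρ)) u v = pu ρ u v * (pu (pu ρ) u v - pv (pv ρ) u v) := by
  have hgauss : HasDerivAt (fun x => ρ x v * (pu (pu ρ) x v + pv (pv ρ) x v)
      - (pu ρ x v ^ 2 + pv ρ x v ^ 2) + 1) 0 u :=
    (hasDerivAt_const u 0).congr_of_eventuallyEq <|
      (eventually_mk_right_mem h.isOpen hp).mono fun _ hx => h.gauss hx
  have hρ := hasDerivAt_pu h.isOpen h.smooth_ρ (by simp) hp
  have hρu := hasDerivAt_pu h.isOpen h.smooth_pu_ρ (by simp) hp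
  have hρv := hasDerivAt_pu h.isOpen h.smooth_pv_ρ (by simp) hp
  have hρuu := hasDerivAt_pu h.isOpen h.smooth_pu_pu_ρ (by simp) hp
  have hρvv := hasDerivAt_pu h.isOpen h.smooth_pv_pv_ρ (by simp) hp
  have hzero := (((hρ.fun_mul (hρuu.fun_add hρvv)).fun_sub
    ((hρu.fun_pow 2).fun_add (hρv.fun_pow 2))).add_const 1).unique hgauss
  rw [h.pu_pv_ρ hp, h.pu_pv_pv_ρ hp] at hzero
  push_cast at hzero
  linear_combination hzero

theorem hasDerivAt_frame_u (h : PlanarGaussWeingarten S ρ X N) (hp : (u, v) ∈ S)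
    {α β γ : ℝ → ℝ} {α' β' γ' : ℝ} (hα : HasDerivAt α α' u) (hβ : HasDerivAt β β' u)
    (hγ : HasDerivAt γ γ' u) :
    HasDerivAt (fun x => α x • pu X x v + β x • pv X x v + γ x • N x v)
      ((α' + α u * (pu ρ u v / ρ u v) + β u * (pv ρ u v / ρ u v) + γ u / ρ u v ^ 2) • pu X u v
        + (β' - α u * (pv ρ u v / ρ u v) + β u * (pu ρ u v / ρ u v)) • pv X u v
        + (γ' + α u) • N u v) u := by
  have hXu := hasDerivAt_pu h.isOpen h.smooth_pu_X (by simp) hp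
  have hXv := hasDerivAt_pu h.isOpen h.smooth_pv_X (by simp) hp
  have hN := hasDerivAt_pu h.isOpen h.smooth_N (by simp) hp
  refine (((hα.fun_smul hXu).fun_add (hβ.fun_smul hXv)).fun_add (hγ.fun_smul hN)).congr_deriv ?_
  rw [h.pu_pu_X hp, h.pu_pv_X hp, h.pu_N hp]
  module

theorem hasDerivAt_frame_v (h : PlanarGaussWeingarten S ρ X N) (hp : (u, v) ∈ S)
    {α β γ : ℝ → ℝ} {α' β' γ' : ℝ} (hα : HasDerivAt α α' v) (hβ : HasDerivAt β β' v)
    (hγ : HasDerivAt γ γ' v) :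
    HasDerivAt (fun y => α y • pu X u y + β y • pv X u y + γ y • N u y)
      ((α' + α v * (pv ρ u v / ρ u v) - β v * (pu ρ u v / ρ u v)) • pu X u v
        + (β' + α v * (pu ρ u v / ρ u v) + β v * (pv ρ u v / ρ u v) - γ v / ρ u v ^ 2) • pv X u v
        + (γ' - β v) • N u v) v := by
  have hXu := hasDerivAt_pv h.isOpen h.smooth_pu_X (by simp) hp
  have hXv := hasDerivAt_pv h.isOpen h.smooth_pv_X (by simp) hp
  have hN := hasDerivAt_pv h.isOpen h.smooth_N (by simp) hp
  refine (((hα.fun_smul hXu).fun_add (hβ.fun_smul hXv)).fun_add (hγ.fun_smul hN)).congr_deriv ?_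
  rw [h.pv_pu_X hp, h.pv_pv_X hp, h.pv_N hp]
  module

theorem hasDerivAt_axialU_u (h : PlanarGaussWeingarten S ρ X N) (hp : (u, v) ∈ S) :
    HasDerivAt (fun x => axialU ρ X N x v) 0 u := by
  have hne := h.ρ_ne_zero hp
  have hρ := hasDerivAt_pu h.isOpen h.smooth_ρ (by simp) hp
  have hρu := hasDerivAt_pu h.isOpen h.smooth_pu_ρ (by simp) hp
  have hρv := hasDerivAt_pu h.isOpen h.smooth_pv_ρ (by simp) hp
  have hρuu := hasDerivAt_pu h.isOpen h.smooth_pu_pu_ρ (by simp) hp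
  rw [h.pu_pv_ρ hp] at hρv
  set α : ℝ → ℝ := fun x => (pu ρ x v ^ 2 - ρ x v * pu (pu ρ) x v) / ρ x v ^ 2 with hα_def
  set β : ℝ → ℝ := fun x => -(pu ρ x v * pv ρ x v / ρ x v ^ 2) with hβ_def
  set γ : ℝ → ℝ := fun x => pu ρ x v / ρ x v with hγ_def
  have hα : HasDerivAt α (-(α u * (pu ρ u v / ρ u v) + β u * (pv ρ u v / ρ u v)
      + γ u / ρ u v ^ 2)) u := by
    refine (((hρu.fun_pow 2).fun_sub (hρ.fun_mul hρuu)).fun_div (hρ.fun_pow 2)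
      (pow_ne_zero 2 hne)).congr_deriv ?_
    simp only [hα_def, hβ_def, hγ_def]
    field_simp
    linear_combination ρ u v * pu ρ u v * h.gauss hp - ρ u v ^ 2 * h.ρ_mul_pu_pu_pu_ρ hp
  have hβ : HasDerivAt β (α u * (pv ρ u v / ρ u v) - β u * (pu ρ u v / ρ u v)) u := by
    refine ((hρu.fun_mul hρv).fun_div (hρ.fun_pow 2) (pow_ne_zero 2 hne)).fun_neg.congr_deriv ?_
    simp only [hα_def, hβ_def]
    field_simp
    ring
  have hγ : HasDerivAt γ (-α u) u := by
    refine (hρu.fun_div hρ hne).congr_deriv ?_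
    simp only [hα_def]
    field_simp
    ring
  convert h.hasDerivAt_frame_u hp hα hβ hγ using 1
  · simp only [axialU, hα_def, hβ_def, hγ_def, neg_smul, ← sub_eq_add_neg]
  · module

theorem hasDerivAt_axialU_v (h : PlanarGaussWeingarten S ρ X N) (hp : (u, v) ∈ S) :
    HasDerivAt (fun y => axialU ρ X N u y) 0 v := by
  have hne := h.ρ_ne_zero hp
  have hρ := hasDerivAt_pv h.isOpen h.smooth_ρ (by simp) hp
  have hρu := hasDerivAt_pv h.isOpen h.smooth_pu_ρ (by simp) hp
  have hρv := hasDerivAt_pv h.isOpen h.smooth_pv_ρ (by simp) hp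
  have hρuu := hasDerivAt_pv h.isOpen h.smooth_pu_pu_ρ (by simp) hp
  rw [h.pv_pu_ρ hp] at hρu
  rw [h.pv_pu_pu_ρ hp] at hρuu
  set α : ℝ → ℝ := fun y => (pu ρ u y ^ 2 - ρ u y * pu (pu ρ) u y) / ρ u y ^ 2 with hα_def
  set β : ℝ → ℝ := fun y => -(pu ρ u y * pv ρ u y / ρ u y ^ 2) with hβ_def
  set γ : ℝ → ℝ := fun y => pu ρ u y / ρ u y with hγ_def
  have hα : HasDerivAt α (β v * (pu ρ u v / ρ u v) - α v * (pv ρ u v / ρ u v)) v := by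
    refine (((hρu.fun_pow 2).fun_sub (hρ.fun_mul hρuu)).fun_div (hρ.fun_pow 2)
      (pow_ne_zero 2 hne)).congr_deriv ?_
    simp only [hα_def, hβ_def]
    field_simp
    ring
  have hβ : HasDerivAt β (γ v / ρ u v ^ 2 - α v * (pu ρ u v / ρ u v)
      - β v * (pv ρ u v / ρ u v)) v := by
    refine ((hρu.fun_mul hρv).fun_div (hρ.fun_pow 2) (pow_ne_zero 2 hne)).fun_neg.congr_deriv ?_
    simp only [hα_def, hβ_def, hγ_def]
    field_simp
    linear_combination -(ρ u v * pu ρ u v) * h.gauss hp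
  have hγ : HasDerivAt γ (β v) v := by
    refine (hρu.fun_div hρ hne).congr_deriv ?_
    simp only [hβ_def]
    field_simp
    ring
  convert h.hasDerivAt_frame_v hp hα hβ hγ using 1
  · simp only [axialU, hα_def, hβ_def, hγ_def, neg_smul, ← sub_eq_add_neg]
  · module

theorem smooth_axialU (h : PlanarGaussWeingarten S ρ X N) :
    ContDiffOn ℝ ∞ (uncurry (axialU ρ X N)) S := by
  have hne : ∀ p ∈ S, uncurry ρ p ≠ 0 := fun _ hp => h.ρ_ne_zero hp
  have hne_sq : ∀ p ∈ S, uncurry ρ p ^ 2 ≠ 0 := fun p hp => pow_ne_zero 2 (hne p hp)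
  have hρ_sq := h.smooth_ρ.pow 2
  have hα := ((h.smooth_pu_ρ.pow 2).sub (h.smooth_ρ.mul h.smooth_pu_pu_ρ)).div hρ_sq hne_sq
  have hβ := (h.smooth_pu_ρ.mul h.smooth_pv_ρ).div hρ_sq hne_sq
  have hγ := h.smooth_pu_ρ.div h.smooth_ρ hne
  exact ((hα.smul h.smooth_pu_X).sub (hβ.smul h.smooth_pv_X)).add (hγ.smul h.smooth_N)

theorem axialU_eq_axialU (h : PlanarGaussWeingarten S ρ X N) (hSc : IsPreconnected S)
    {p q : ℝ × ℝ} (hp : p ∈ S) (hq : q ∈ S) : axialU ρ X N p.1 p.2 = axialU ρ X N q.1 q.2 :=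
  eq_of_pu_eq_zero_of_pv_eq_zero h.isOpen hSc (h.smooth_axialU.differentiableOn (by simp))
    (fun _ hp => (h.hasDerivAt_axialU_u hp).deriv) (fun _ hp => (h.hasDerivAt_axialU_v hp).deriv)
    hp hq

theorem axialU_eq_smul_pu_add_smul_pu_pu (h : PlanarGaussWeingarten S ρ X N)
    (hp : (u, v) ∈ S) : axialU ρ X N u v
      = (-(pu (pu ρ) u v / ρ u v)) • pu X u v + (pu ρ u v / ρ u v) • pu (pu X) u v := by
  have hne := h.ρ_ne_zero hp
  rw [h.pu_pu_X hp, axialU]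
  match_scalars <;> field_simp
  ring

theorem axialU_ne_zero (h : PlanarGaussWeingarten S ρ X N) (hp : (u, v) ∈ S)
    (hρu : pu ρ u v ≠ 0) (hN : N u v ∉ Submodule.span ℝ {pu X u v, pv X u v}) :
    axialU ρ X N u v ≠ 0 := fun hzero => by
  have hmem : (pu ρ u v / ρ u v) • N u v ∈ Submodule.span ℝ {pu X u v, pv X u v} := by
    rw [eq_neg_of_add_eq_zero_right hzero]
    exact neg_mem <| sub_mem (Submodule.smul_mem _ _ (Submodule.subset_span (by simp)))
      (Submodule.smul_mem _ _ (Submodule.subset_span (by simp)))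
  exact hN <| (Submodule.smul_mem_iff _ (div_ne_zero hρu (h.ρ_ne_zero hp))).mp hmem

end NormedSpace

section Minkowski

variable {S : Set (ℝ × ℝ)} {ρ : ℝ → ℝ → ℝ} {X N : ℝ → ℝ → ℝ × ℝ × ℝ} {u v : ℝ}

theorem mink_osculatingNormalU_axialU (h : PlanarGaussWeingarten S ρ X N) (hp : (u, v) ∈ S) :
    mink (osculatingNormalU ρ X u v) (axialU ρ X N u v) = 0 := by
  rw [h.axialU_eq_smul_pu_add_smul_pu_pu hp]
  exact mink_smul_lcross_add _ _ _ _ _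

theorem smooth_osculatingNormalU (h : PlanarGaussWeingarten S ρ X N) :
    ContDiffOn ℝ ∞ (uncurry (osculatingNormalU ρ X)) S :=
  ((h.smooth_ρ.pow 2).inv fun _ hp => pow_ne_zero 2 (h.ρ_ne_zero hp)).smul <|
    contDiffOn_lcross h.smooth_pu_X (contDiffOn_pu h.isOpen h.smooth_pu_X (by simp))

theorem mink_pv_osculatingNormalU_axialU (h : PlanarGaussWeingarten S ρ X N)
    (hSc : IsPreconnected S) (hp : (u, v) ∈ S) :
    mink (pv (osculatingNormalU ρ X) u v) (axialU ρ X N u v) = 0 := by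
  refine mink_eq_zero_of_hasDerivAt
    (hasDerivAt_pv h.isOpen h.smooth_osculatingNormalU (by simp) hp) ?_
  filter_upwards [eventually_mk_left_mem h.isOpen hp] with y hy
  rw [h.axialU_eq_axialU hSc hp hy]
  exact h.mink_osculatingNormalU_axialU hy

theorem axial_direction_u (h : PlanarGaussWeingarten S ρ X N) (hSc : IsPreconnected S)
    (hN : ∀ p ∈ S, N p.1 p.2 ∉ Submodule.span ℝ {pu X p.1 p.2, pv X p.1 p.2})
    {V m : ℝ → ℝ → ℝ × ℝ × ℝ} (hV : ∀ p ∈ S, V p.1 p.2 = axialU ρ X N p.1 p.2)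
    (hm : ∀ p ∈ S, m p.1 p.2 = osculatingNormalU ρ X p.1 p.2) :
    (∀ p ∈ S, pu V p.1 p.2 = 0 ∧ pv V p.1 p.2 = 0) ∧
    (∀ p ∈ S, mink (m p.1 p.2) (V p.1 p.2) = 0 ∧ mink (pv m p.1 p.2) (V p.1 p.2) = 0) ∧
    ((∃ p ∈ S, pu ρ p.1 p.2 ≠ 0) → ∀ q ∈ S, V q.1 q.2 ≠ 0) := by
  refine ⟨fun p hp => ⟨?_, ?_⟩, fun p hp => ⟨?_, ?_⟩, ?_⟩
  · exact (pu_congr h.isOpen hV hp).trans (h.hasDerivAt_axialU_u hp).deriv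
  · exact (pv_congr h.isOpen hV hp).trans (h.hasDerivAt_axialU_v hp).deriv
  · rw [hm p hp, hV p hp]
    exact h.mink_osculatingNormalU_axialU hp
  · rw [pv_congr h.isOpen hm hp, hV p hp]
    exact h.mink_pv_osculatingNormalU_axialU hSc hp
  · rintro ⟨p, hp, hρu⟩ q hq
    rw [hV q hq, h.axialU_eq_axialU hSc hq hp]
    exact h.axialU_ne_zero hp hρu (hN p hp)

end Minkowski

end PlanarGaussWeingarten

theorem axial_directions_exist_general {S : Set (ℝ × ℝ)} (hSc : IsPreconnected S)
    {ρ : ℝ → ℝ → ℝ} {X N : ℝ → ℝ → ℝ × ℝ × ℝ} (h : PlanarGaussWeingarten S ρ X N)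
    (hN : ∀ p ∈ S, N p.1 p.2 ∉ Submodule.span ℝ {pu X p.1 p.2, pv X p.1 p.2})
    {V1 V2 m n : ℝ → ℝ → ℝ × ℝ × ℝ}
    (hV1 : ∀ p ∈ S, V1 p.1 p.2 = axialU ρ X N p.1 p.2)
    (hV2 : ∀ p ∈ S, V2 p.1 p.2 = axialV ρ X N p.1 p.2)
    (hm : ∀ p ∈ S, m p.1 p.2 = osculatingNormalU ρ X p.1 p.2)
    (hn : ∀ p ∈ S, n p.1 p.2 = osculatingNormalV ρ X p.1 p.2) :
    (∀ p ∈ S, pu V1 p.1 p.2 = 0 ∧ pv V1 p.1 p.2 = 0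
      ∧ pu V2 p.1 p.2 = 0 ∧ pv V2 p.1 p.2 = 0) ∧
    (∀ p ∈ S, mink (m p.1 p.2) (V1 p.1 p.2) = 0 ∧ mink (pv m p.1 p.2) (V1 p.1 p.2) = 0
      ∧ mink (n p.1 p.2) (V2 p.1 p.2) = 0 ∧ mink (pu n p.1 p.2) (V2 p.1 p.2) = 0) ∧
    ((∃ p ∈ S, pu ρ p.1 p.2 ≠ 0) → ∀ q ∈ S, V1 q.1 q.2 ≠ 0) ∧
    ((∃ p ∈ S, pv ρ p.1 p.2 ≠ 0) → ∀ q ∈ S, V2 q.1 q.2 ≠ 0) := by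
  have hSc_swap : IsPreconnected (Prod.swap ⁻¹' S) :=
    (Homeomorph.prodComm ℝ ℝ).isPreconnected_preimage.mpr hSc
  have hN_swap : ∀ p ∈ Prod.swap ⁻¹' S,
      -N p.2 p.1 ∉ Submodule.span ℝ {pv X p.2 p.1, pu X p.2 p.1} := fun p hp => by
    rw [neg_mem_iff, Set.pair_comm]
    exact hN p.swap hp
  obtain ⟨hconst₁, horth₁, hne₁⟩ := h.axial_direction_u hSc hN hV1 hm
  obtain ⟨hconst₂, horth₂, hne₂⟩ := h.swap.axial_direction_u hSc_swap hN_swap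
    (V := fun u v => V2 v u) (m := fun u v => n v u)
    (fun p hp => (hV2 p.swap hp).trans (axialV_eq_axialU_swap ρ X N p.2 p.1))
    (fun p hp => hn p.swap hp)
  exact ⟨fun p hp => ⟨(hconst₁ p hp).1, (hconst₁ p hp).2,
      (hconst₂ p.swap hp).2, (hconst₂ p.swap hp).1⟩,
    fun p hp => ⟨(horth₁ p hp).1, (horth₁ p hp).2, (horth₂ p.swap hp).1, (horth₂ p.swap hp).2⟩,
    hne₁, fun ⟨p, hp, hρv⟩ q hq => hne₂ ⟨p.swap, hp, hρv⟩ q.swap hq⟩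

/-- For a maximal surface with planar curvature lines, the axial
direction fields v₁ and v₂ are constant on Σ, are Minkowski-orthogonal to m = ρ⁻²(X_u × X_uu)
and m_v (resp. n = ρ⁻²(X_v × X_vv) and n_u), and are nonzero whenever ρ_u (resp. ρ_v) is
somewhere nonzero. -/
theorem axial_directions_exist
    (S : Set (ℝ × ℝ)) (hS : IsOpen S) (hSc : IsConnected S)
    (ρ : ℝ → ℝ → ℝ) (X N : ℝ → ℝ → ℝ × ℝ × ℝ)
    (hρ : ContDiffOn ℝ (⊤ : ℕ∞) (fun p : ℝ × ℝ => ρ p.1 p.2) S)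
    (hρpos : ∀ p ∈ S, 0 < ρ p.1 p.2)
    (hX : ContDiffOn ℝ (⊤ : ℕ∞) (fun p : ℝ × ℝ => X p.1 p.2) S)
    (hN : ContDiffOn ℝ (⊤ : ℕ∞) (fun p : ℝ × ℝ => N p.1 p.2) S)
    (hGauss : ∀ p ∈ S,
      ρ p.1 p.2 * (pu (pu ρ) p.1 p.2 + pv (pv ρ) p.1 p.2)
        - ((pu ρ p.1 p.2) ^ 2 + (pv ρ p.1 p.2) ^ 2) + 1 = 0)
    (hPlanar : ∀ p ∈ S, pv (pu ρ) p.1 p.2 = 0)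
    (hGW1 : ∀ p ∈ S, pu (pu X) p.1 p.2 =
      (pu ρ p.1 p.2 / ρ p.1 p.2) • pu X p.1 p.2
        - (pv ρ p.1 p.2 / ρ p.1 p.2) • pv X p.1 p.2 + N p.1 p.2)
    (hGW2 : ∀ p ∈ S, pv (pv X) p.1 p.2 =
      -((pu ρ p.1 p.2 / ρ p.1 p.2) • pu X p.1 p.2)
        + (pv ρ p.1 p.2 / ρ p.1 p.2) • pv X p.1 p.2 - N p.1 p.2)
    (hGW3 : ∀ p ∈ S, pv (pu X) p.1 p.2 =
      (pv ρ p.1 p.2 / ρ p.1 p.2) • pu X p.1 p.2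
        + (pu ρ p.1 p.2 / ρ p.1 p.2) • pv X p.1 p.2)
    (hGW4 : ∀ p ∈ S, pu N p.1 p.2 = ((ρ p.1 p.2) ^ 2)⁻¹ • pu X p.1 p.2)
    (hGW5 : ∀ p ∈ S, pv N p.1 p.2 = -(((ρ p.1 p.2) ^ 2)⁻¹ • pv X p.1 p.2))
    (hfr1 : ∀ p ∈ S, mink (pu X p.1 p.2) (pu X p.1 p.2) = (ρ p.1 p.2) ^ 2)
    (hfr2 : ∀ p ∈ S, mink (pv X p.1 p.2) (pv X p.1 p.2) = (ρ p.1 p.2) ^ 2)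
    (hfr3 : ∀ p ∈ S, mink (pu X p.1 p.2) (pv X p.1 p.2) = 0)
    (hfr4 : ∀ p ∈ S, mink (pu X p.1 p.2) (N p.1 p.2) = 0)
    (hfr5 : ∀ p ∈ S, mink (pv X p.1 p.2) (N p.1 p.2) = 0)
    (hfr6 : ∀ p ∈ S, mink (N p.1 p.2) (N p.1 p.2) = -1)
    (V1 V2 m n : ℝ → ℝ → ℝ × ℝ × ℝ)
    (hV1 : ∀ p ∈ S, V1 p.1 p.2 =
      ((((pu ρ p.1 p.2) ^ 2 - ρ p.1 p.2 * pu (pu ρ) p.1 p.2) / (ρ p.1 p.2) ^ 2) • pu X p.1 p.2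
        - ((pu ρ p.1 p.2 * pv ρ p.1 p.2) / (ρ p.1 p.2) ^ 2) • pv X p.1 p.2
        + (pu ρ p.1 p.2 / ρ p.1 p.2) • N p.1 p.2))
    (hV2 : ∀ p ∈ S, V2 p.1 p.2 =
      (-(((pu ρ p.1 p.2 * pv ρ p.1 p.2) / (ρ p.1 p.2) ^ 2) • pu X p.1 p.2)
        + (((pv ρ p.1 p.2) ^ 2 - ρ p.1 p.2 * pv (pv ρ) p.1 p.2) / (ρ p.1 p.2) ^ 2) • pv X p.1 p.2
        - (pv ρ p.1 p.2 / ρ p.1 p.2) • N p.1 p.2))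
    (hm : ∀ p ∈ S, m p.1 p.2 =
      ((ρ p.1 p.2) ^ 2)⁻¹ • lcross (pu X p.1 p.2) (pu (pu X) p.1 p.2))
    (hn : ∀ p ∈ S, n p.1 p.2 =
      ((ρ p.1 p.2) ^ 2)⁻¹ • lcross (pv X p.1 p.2) (pv (pv X) p.1 p.2)) :
    (∀ p ∈ S, pu V1 p.1 p.2 = 0 ∧ pv V1 p.1 p.2 = 0
      ∧ pu V2 p.1 p.2 = 0 ∧ pv V2 p.1 p.2 = 0) ∧
    (∀ p ∈ S, mink (m p.1 p.2) (V1 p.1 p.2) = 0 ∧ mink (pv m p.1 p.2) (V1 p.1 p.2) = 0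
      ∧ mink (n p.1 p.2) (V2 p.1 p.2) = 0 ∧ mink (pu n p.1 p.2) (V2 p.1 p.2) = 0) ∧
    ((∃ p ∈ S, pu ρ p.1 p.2 ≠ 0) → ∀ q ∈ S, V1 q.1 q.2 ≠ 0) ∧
    ((∃ p ∈ S, pv ρ p.1 p.2 ≠ 0) → ∀ q ∈ S, V2 q.1 q.2 ≠ 0) := by
  exact axial_directions_exist_general hSc.isPreconnected
    ⟨hS, hρ, hX, hN, fun u v hp => (hρpos (u, v) hp).ne', fun u v => hGauss (u, v),
      fun u v => hPlanar (u, v), fun u v => hGW1 (u, v), fun u v => hGW2 (u, v),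
      fun u v => hGW3 (u, v), fun u v => hGW4 (u, v), fun u v => hGW5 (u, v)⟩
    (fun p hp => notMem_span_pair_of_mink_eq_zero (hfr4 p hp) (hfr5 p hp) (by simp [hfr6 p hp]))
    hV1 hV2 hm hn
end
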